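/- Let (t, n, b) be a smooth right-handed orthonormal frame on an open set U ⊆ ℝ³ with Ω_n = n·(curl n) = 0 identically on U, let H be a smooth scalar function and v a smooth nowhere-zero vector field on U with v = n × ∇H and t = v/‖v‖. Then at every point of U: ∂_s ln‖v‖ = n·(curl b). -/

import Mathlib

/-!
Write `λ = ‖v‖`, so `v = λ t`. Since `n` is a unit vector, the triple product expansion gives
`∇H = (n·∇H) n + (n × ∇H) × n = β n + λ (t × n) = β n + λ b` on `U`, with `β = n·∇H`
(`grad_decomp`). Taking the curl, which vanishes because second derivatives of `H` commute
(`pd_comm`), and dotting with `n` kills the `∇β` term, and the hypothesis `n·(curl n) = 0` kills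
the `β` term. What is left is `λ n·(curl b) + n·(∇λ × b) = 0`, and
`n·(∇λ × b) = -t·∇λ` because `t = n × b`. Dividing by `λ` gives the claim.
-/

noncomputable section

/-- Three-dimensional Euclidean space. -/
abbrev E3 : Type := EuclideanSpace ℝ (Fin 3)

/-- The Euclidean dot product on ℝ³. -/
def dot (u v : E3) : ℝ := ∑ i, u i * v i

/-- The cross product on ℝ³. -/
def cross (u v : E3) : E3 :=
  (WithLp.equiv 2 (Fin 3 → ℝ)).symm
    ![u 1 * v 2 - u 2 * v 1, u 2 * v 0 - u 0 * v 2, u 0 * v 1 - u 1 * v 0]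

/-- Partial derivative of a scalar function in the `i`-th coordinate direction. -/
def pd (i : Fin 3) (f : E3 → ℝ) (x : E3) : ℝ :=
  fderiv ℝ f x (EuclideanSpace.single i 1)

/-- The gradient ∇f of a scalar function. -/
def grad (f : E3 → ℝ) (x : E3) : E3 :=
  (WithLp.equiv 2 (Fin 3 → ℝ)).symm ![pd 0 f x, pd 1 f x, pd 2 f x]

/-- The curl ∇×F of a vector field. -/
def curl (F : E3 → E3) (x : E3) : E3 :=
  (WithLp.equiv 2 (Fin 3 → ℝ)).symm
    ![pd 1 (fun y => F y 2) x - pd 2 (fun y => F y 1) x,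
      pd 2 (fun y => F y 0) x - pd 0 (fun y => F y 2) x,
      pd 0 (fun y => F y 1) x - pd 1 (fun y => F y 0) x]

/-- Directional derivative ∂ₛ f = t·∇f of a scalar function along a vector field t. -/
def ds (t : E3 → E3) (f : E3 → ℝ) (x : E3) : ℝ := dot (t x) (grad f x)

/-- Componentwise directional derivative (u·∇)w of a vector field w along u. -/
def dirDeriv (u w : E3 → E3) (x : E3) : E3 :=
  (WithLp.equiv 2 (Fin 3 → ℝ)).symm
    ![fderiv ℝ (fun y => w y 0) x (u x),
      fderiv ℝ (fun y => w y 1) x (u x),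
      fderiv ℝ (fun y => w y 2) x (u x)]

/-- Helicity density w·(curl w) of a vector field. -/
def hel (w : E3 → E3) (x : E3) : ℝ := dot (w x) (curl w x)

/-- Cross-helicity sum n·(curl b) + b·(curl n). -/
def crossHel (n b : E3 → E3) (x : E3) : ℝ :=
  dot (n x) (curl b x) + dot (b x) (curl n x)

/-- A smooth right-handed orthonormal (Serret–Frenet type) frame on U. -/
def IsFrameOn (t n b : E3 → E3) (U : Set E3) : Prop :=
  ContDiffOn ℝ (⊤ : ℕ∞) t U ∧ ContDiffOn ℝ (⊤ : ℕ∞) n U ∧ ContDiffOn ℝ (⊤ : ℕ∞) b U ∧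
  ∀ x ∈ U, ‖t x‖ = 1 ∧ ‖n x‖ = 1 ∧ ‖b x‖ = 1 ∧
    dot (t x) (n x) = 0 ∧ dot (t x) (b x) = 0 ∧ dot (n x) (b x) = 0 ∧
    b x = cross (t x) (n x)

/-- Triple product expansion of `g` along a unit vector `n`, for `n × g = l t`. -/
theorem grad_decomp (n g t b : E3) (l : ℝ) (hn : dot n n = 1)
    (h : cross n g = l • t) (hb : b = cross t n) (i : Fin 3) :
    g i = dot n g * n i + l * b i := by
  have h0 := congrArg (fun w : E3 => w 0) h
  have h1 := congrArg (fun w : E3 => w 1) h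
  have h2 := congrArg (fun w : E3 => w 2) h
  subst hb
  simp [cross, dot, Fin.sum_univ_three] at h0 h1 h2 hn ⊢
  fin_cases i <;> simp
  · linear_combination (-g 0) * hn + n 2 * h1 - n 1 * h2
  · linear_combination (-g 1) * hn + n 0 * h2 - n 2 * h0
  · linear_combination (-g 2) * hn + n 1 * h0 - n 0 * h1

theorem pd_comm {H : E3 → ℝ} {x : E3} (hH : ContDiffAt ℝ 2 H x) (i j : Fin 3) :
    pd i (pd j H) x = pd j (pd i H) x := by
  have hs : IsSymmSndFDerivAt ℝ H x := hH.isSymmSndFDerivAt (by simp)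
  have hd : DifferentiableAt ℝ (fderiv ℝ H) x :=
    (hH.fderiv_right (m := 1) one_add_one_eq_two.le).differentiableAt (by simp)
  have key (i j : Fin 3) : pd i (pd j H) x =
      fderiv ℝ (fderiv ℝ H) x (EuclideanSpace.single i 1) (EuclideanSpace.single j 1) := by
    unfold pd
    rw [fderiv_clm_apply hd (by fun_prop)]
    simp
  rw [key, key]
  exact hs _ _

theorem differentiableAt_pd {H : E3 → ℝ} {x : E3} (hH : ContDiffAt ℝ 2 H x)
    (i : Fin 3) : DifferentiableAt ℝ (pd i H) x := by
  have hd : DifferentiableAt ℝ (fderiv ℝ H) x :=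
    (hH.fderiv_right (m := 1) one_add_one_eq_two.le).differentiableAt (by simp)
  unfold pd
  fun_prop

theorem pd_mul_add_mul {f g h k : E3 → ℝ} {x : E3} (hf : DifferentiableAt ℝ f x)
    (hg : DifferentiableAt ℝ g x) (hh : DifferentiableAt ℝ h x) (hk : DifferentiableAt ℝ k x)
    (i : Fin 3) :
    pd i (fun y => f y * g y + h y * k y) x =
      pd i f x * g x + f x * pd i g x + (pd i h x * k x + h x * pd i k x) := by
  unfold pd
  rw [fderiv_fun_add (hf.fun_mul hg) (hh.fun_mul hk), fderiv_fun_mul hf hg, fderiv_fun_mul hh hk]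
  simp
  ring

theorem dot_self_of_norm_one {u : E3} (h : ‖u‖ = 1) : dot u u = 1 := by
  have := EuclideanSpace.real_norm_sq_eq u
  rw [h] at this
  simp only [dot, ← pow_two]
  linarith

/-- if Ωₙ = 0 and v = n × ∇H with t = v/‖v‖, then
∂ₛ ln‖v‖ = n·(curl b). -/
theorem normal_hamiltonian_log_norm
    (U : Set E3) (hU : IsOpen U) (t n b : E3 → E3)
    (hframe : IsFrameOn t n b U)
    (hΩn : ∀ x ∈ U, hel n x = 0)
    (H : E3 → ℝ) (hH : ContDiffOn ℝ (⊤ : ℕ∞) H U)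
    (v : E3 → E3) (hv : ContDiffOn ℝ (⊤ : ℕ∞) v U) (hv0 : ∀ x ∈ U, v x ≠ 0)
    (hham : ∀ x ∈ U, v x = cross (n x) (grad H x))
    (ht : ∀ x ∈ U, t x = ‖v x‖⁻¹ • v x) :
    ∀ x ∈ U, ds t (fun y => Real.log ‖v y‖) x = dot (n x) (curl b x) := by
  obtain ⟨-, hnS, hbS, hfr⟩ := hframe
  intro x hx
  have hUx : U ∈ nhds x := hU.mem_nhds hx
  have hHx : ContDiffAt ℝ 2 H x :=
    (hH.contDiffAt hUx).of_le (WithTop.coe_le_coe.2 (le_top : (2 : ℕ∞) ≤ ⊤))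
  have hnd : DifferentiableAt ℝ n x := (hnS.contDiffAt hUx).differentiableAt (by simp)
  have hbd : DifferentiableAt ℝ b x := (hbS.contDiffAt hUx).differentiableAt (by simp)
  have hvd : DifferentiableAt ℝ v x := (hv.contDiffAt hUx).differentiableAt (by simp)
  have hni (i : Fin 3) : DifferentiableAt ℝ (fun y => n y i) x := by fun_prop
  have hbi (i : Fin 3) : DifferentiableAt ℝ (fun y => b y i) x := by fun_prop
  have hld : DifferentiableAt ℝ (fun y => ‖v y‖) x := hvd.norm ℝ (hv0 x hx)
  have hl0 : ‖v x‖ ≠ 0 := norm_ne_zero_iff.2 (hv0 x hx)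
  have hpH (i : Fin 3) := differentiableAt_pd hHx i
  obtain ⟨β, hβ⟩ : ∃ β : E3 → ℝ, β = fun y => dot (n y) (grad H y) := ⟨_, rfl⟩
  have hβd : DifferentiableAt ℝ β x := by
    have h0 := hpH 0
    have h1 := hpH 1
    have h2 := hpH 2
    rw [hβ]
    simp only [dot, grad, Fin.sum_univ_three, WithLp.equiv_symm_apply, Matrix.cons_val]
    fun_prop
  have hdec (i : Fin 3) : pd i H =ᶠ[nhds x] fun y => β y * n y i + ‖v y‖ * b y i := by
    filter_upwards [hUx] with y hy
    obtain ⟨-, hn1, -, -, -, -, hb⟩ := hfr y hy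
    have h : cross (n y) (grad H y) = ‖v y‖ • t y := by
      rw [← hham y hy, ht y hy, smul_smul, mul_inv_cancel₀ (norm_ne_zero_iff.2 (hv0 y hy)),
        one_smul]
    have := grad_decomp (n y) (grad H y) (t y) (b y) ‖v y‖ (dot_self_of_norm_one hn1) h hb i
    rw [hβ]
    dsimp only
    rw [← this]
    fin_cases i <;> simp [grad]
  have hsnd (j i : Fin 3) : pd j (pd i H) x =
      pd j β x * n x i + β x * pd j (fun y => n y i) x +
        (pd j (fun y => ‖v y‖) x * b x i + ‖v x‖ * pd j (fun y => b y i) x) := by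
    rw [← pd_mul_add_mul hβd (hni i) hld (hbi i) j]
    rw [pd, (hdec i).fderiv_eq, pd]
  have hlog (i : Fin 3) : pd i (fun y => Real.log ‖v y‖) x =
      ‖v x‖⁻¹ * pd i (fun y => ‖v y‖) x := by
    unfold pd
    rw [fderiv.log hld hl0]
    simp
  have s01 := pd_comm hHx 0 1
  have s12 := pd_comm hHx 1 2
  have s20 := pd_comm hHx 2 0
  rw [hsnd, hsnd] at s01 s12 s20
  obtain ⟨-, hn1, -, htn, -, -, hb⟩ := hfr x hx
  have hn2 := dot_self_of_norm_one hn1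
  have hb0 := congrArg (fun w : E3 => w 0) hb
  have hb1 := congrArg (fun w : E3 => w 1) hb
  have hb2 := congrArg (fun w : E3 => w 2) hb
  have hhel := hΩn x hx
  simp only [hel, ds, dot, grad, curl, cross, Fin.sum_univ_three, WithLp.equiv_symm_apply,
    Matrix.cons_val, hlog] at hhel hb0 hb1 hb2 hn2 htn ⊢
  -- `t = n × b`, in coordinates
  have t0 : t x 0 = n x 1 * b x 2 - n x 2 * b x 1 := by
    rw [hb1, hb2]; linear_combination (-t x 0) * hn2 + n x 0 * htn
  have t1 : t x 1 = n x 2 * b x 0 - n x 0 * b x 2 := by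
    rw [hb0, hb2]; linear_combination (-t x 1) * hn2 + n x 1 * htn
  have t2 : t x 2 = n x 0 * b x 1 - n x 1 * b x 0 := by
    rw [hb0, hb1]; linear_combination (-t x 2) * hn2 + n x 2 * htn
  rw [t0, t1, t2]
  field_simp
  linear_combination (-n x 0) * s12 - n x 1 * s20 - n x 2 * s01 + β x * hhel
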